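/- arXiv:2207.04764 — 3 statements merged into one kernel-verified Lean document; each statement's English description precedes it below -/
import Mathlib

section
/- (Abstract stationary-point error identity.) Let E be a real normed vector space and L : E → ℝ be three times continuously Fréchet differentiable. Let x, x̃ ∈ E, set e := x − x̃, and assume the directional stationarity condition DL(x)(e) = 0, where DL(x) is the Fréchet derivative of L at x. Then L(x) − L(x̃) = (1/2)·DL(x̃)(e) + (1/2)·∫₀¹ D³L(x̃ + s·e)(e,e,e)·s·(s−1) ds, where D³L(y)(e,e,e) denotes the third Fréchet derivative of L at y evaluated at (e,e,e). -/
/-!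
Put `gₖ(s) = DᵏL(xt + s e)(e, …, e)`, so that `gₖ' = gₖ₊₁` for `k < 3`. The function
`F(s) = s(s-1) g₂(s) - (2s-1) g₁(s) + 2 g₀(s)` is then a primitive of `s(s-1) g₃(s)`, because the
lower-order terms of `F'` cancel in pairs. The integral therefore equals
`F(1) - F(0) = 2 (L x - L xt) - DL(x)(e) - DL(xt)(e)`, and `DL(x)(e)` vanishes by stationarity.
-/

/-- Along the line `s ↦ y + s e`, differentiating the `k`-th derivative on the diagonal
`(e, …, e)` gives the `(k+1)`-st derivative on the diagonal. -/
lemma hasDerivAt_iteratedFDeriv_line {E : Type*} [NormedAddCommGroup E] [NormedSpace ℝ E]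
    {L : E → ℝ} {n : ℕ} (hL : ContDiff ℝ n L) {k : ℕ} (hk : k < n) (y e : E) (s : ℝ) :
    HasDerivAt (fun s : ℝ => iteratedFDeriv ℝ k L (y + s • e) (fun _ => e))
      (iteratedFDeriv ℝ (k + 1) L (y + s • e) (fun _ => e)) s := by
  have hline : HasDerivAt (fun s : ℝ => y + s • e) e s := by
    simpa using ((hasDerivAt_id s).smul_const e).const_add y
  have hdiff : Differentiable ℝ (iteratedFDeriv ℝ k L) :=
    hL.differentiable_iteratedFDeriv (by exact_mod_cast hk)
  have hcomp := (hdiff (y + s • e)).hasFDerivAt.comp_hasDerivAt s hline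
  exact (ContinuousMultilinearMap.apply ℝ (fun _ : Fin k => E) ℝ
    (fun _ => e)).hasFDerivAt.comp_hasDerivAt s hcomp

/-- Abstract stationary-point error identity: if `L : E → ℝ` is `C³` and the
directional stationarity condition `DL(x)(e) = 0` holds for `e := x - xt`, then
`L x - L xt = (1/2)·DL(xt)(e) + (1/2)·∫₀¹ D³L(xt + s e)(e,e,e)·s·(s−1) ds`. -/
theorem abstract_stationary_point_error_identity
    {E : Type*} [NormedAddCommGroup E] [NormedSpace ℝ E]
    (L : E → ℝ) (hL : ContDiff ℝ 3 L)
    (x xt : E) (e : E) (he : e = x - xt)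
    (hstat : fderiv ℝ L x e = 0) :
    L x - L xt = (1 / 2) * fderiv ℝ L xt e
      + (1 / 2) * ∫ s in (0 : ℝ)..1,
          (iteratedFDeriv ℝ 3 L (xt + s • e) (fun _ => e)) * s * (s - 1) := by
  have hL' : ContDiff ℝ (3 : ℕ) L := hL
  have hprim : ∀ s ∈ Set.uIcc (0 : ℝ) 1, HasDerivAt
      (fun s : ℝ => s * (s - 1) * iteratedFDeriv ℝ 2 L (xt + s • e) (fun _ => e)
        - (2 * s - 1) * iteratedFDeriv ℝ 1 L (xt + s • e) (fun _ => e)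
        + 2 * iteratedFDeriv ℝ 0 L (xt + s • e) (fun _ => e))
      (iteratedFDeriv ℝ 3 L (xt + s • e) (fun _ => e) * s * (s - 1)) s := by
    intro s _
    have h0 := hasDerivAt_iteratedFDeriv_line hL' (k := 0) (by norm_num) xt e s
    have h1 := hasDerivAt_iteratedFDeriv_line hL' (k := 1) (by norm_num) xt e s
    have h2 := hasDerivAt_iteratedFDeriv_line hL' (k := 2) (by norm_num) xt e s
    have hid := hasDerivAt_id' s
    have hF := (((hid.mul (hid.sub_const 1)).mul h2).sub
      (((hid.const_mul 2).sub_const 1).mul h1)).add (h0.const_mul 2)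
    refine hF.congr_deriv ?_
    simp only [Nat.reduceAdd, Pi.mul_apply]
    ring
  have hcont : Continuous fun s : ℝ =>
      iteratedFDeriv ℝ 3 L (xt + s • e) (fun _ => e) * s * (s - 1) := by
    have hD : Continuous fun s : ℝ => iteratedFDeriv ℝ 3 L (xt + s • e) :=
      hL'.continuous_iteratedFDeriv'.comp (by fun_prop)
    have hDe : Continuous fun s : ℝ => iteratedFDeriv ℝ 3 L (xt + s • e) (fun _ => e) :=
      (ContinuousMultilinearMap.apply ℝ (fun _ : Fin 3 => E) ℝ (fun _ => e)).continuous.comp hD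
    fun_prop
  have hx : xt + e = x := by rw [he]; abel
  rw [intervalIntegral.integral_eq_sub_of_hasDerivAt hprim (hcont.intervalIntegrable 0 1)]
  simp only [iteratedFDeriv_one_apply, iteratedFDeriv_zero_apply, one_smul, zero_smul, add_zero,
    hx, hstat]
  ring
end

section
/- (Temporal split error representation for linear problems.) Under the nested linear DWR setting below, the semidiscretization error in the goal functional satisfies the exact identity J(u) − J(u_k) = F(z − z_k) − A(u_kh, z − z_k). Note that the fully discrete solution u_kh appears in the residual on the right-hand side. -/
/-- Temporal split error representation for linear problems:
`J(u) − J(u_k) = F(z − z_k) − A(u_kh, z − z_k)`. -/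
theorem temporal_split_error_representation_linear
    {X : Type*} [AddCommGroup X] [Module ℝ X]
    (A : X →ₗ[ℝ] X →ₗ[ℝ] ℝ) (F J : X →ₗ[ℝ] ℝ)
    (Xkh Xk : Submodule ℝ X) (hnested : Xkh ≤ Xk)
    (u z uk zk ukh zkh : X)
    (hu : ∀ φ : X, A u φ = F φ)
    (hz : ∀ ψ : X, A ψ z = J ψ)
    (huk : uk ∈ Xk) (hzk : zk ∈ Xk)
    (huk_sol : ∀ φk ∈ Xk, A uk φk = F φk)
    (hzk_sol : ∀ ψk ∈ Xk, A ψk zk = J ψk)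
    (hukh : ukh ∈ Xkh) (hzkh : zkh ∈ Xkh)
    (hukh_sol : ∀ φh ∈ Xkh, A ukh φh = F φh)
    (hzkh_sol : ∀ ψh ∈ Xkh, A ψh zkh = J ψh) :
    J u - J uk = F (z - zk) - A ukh (z - zk) := by
  -- Galerkin orthogonality of the adjoint error, since `ukh ∈ Xkh ≤ Xk`.
  have horth : A ukh (z - zk) = 0 := by
    rw [map_sub, hz, hzk_sol ukh (hnested hukh), sub_self]
  -- Primal-adjoint duality on each level: `F z = A u z = J u` and `F zk = A uk zk = J uk`.
  rw [horth, sub_zero, map_sub, ← hu z, hz, ← huk_sol zk hzk, hzk_sol uk huk]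
end

section
/- (Split error identity for linear problems.) Under the nested linear DWR setting below, the total discretization error in the goal functional splits exactly into a temporal and a spatial part: J(u) − J(u_kh) = [F(z − z_k) − A(u_kh, z − z_k)] + [F(z_k − z_kh) − A(u_kh, z_k − z_kh)]. -/
/-- Split error identity for linear problems:
`J(u) − J(u_kh) = [F(z − z_k) − A(u_kh, z − z_k)] + [F(z_k − z_kh) − A(u_kh, z_k − z_kh)]`. -/
theorem split_error_identity_linear
    {X : Type*} [AddCommGroup X] [Module ℝ X]
    (A : X →ₗ[ℝ] X →ₗ[ℝ] ℝ) (F J : X →ₗ[ℝ] ℝ)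
    (Xkh Xk : Submodule ℝ X) (hnested : Xkh ≤ Xk)
    (u z uk zk ukh zkh : X)
    (hu : ∀ φ : X, A u φ = F φ)
    (hz : ∀ ψ : X, A ψ z = J ψ)
    (huk : uk ∈ Xk) (hzk : zk ∈ Xk)
    (huk_sol : ∀ φk ∈ Xk, A uk φk = F φk)
    (hzk_sol : ∀ ψk ∈ Xk, A ψk zk = J ψk)
    (hukh : ukh ∈ Xkh) (hzkh : zkh ∈ Xkh)
    (hukh_sol : ∀ φh ∈ Xkh, A ukh φh = F φh)
    (hzkh_sol : ∀ ψh ∈ Xkh, A ψh zkh = J ψh) :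
    J u - J ukh = (F (z - zk) - A ukh (z - zk)) + (F (zk - zkh) - A ukh (zk - zkh)) := by
  -- The `zk` terms telescope, and Galerkin orthogonality removes the `zkh` terms,
  -- leaving `F z - A ukh z = A u z - A ukh z = J u - J ukh`.
  have h_galerkin := hukh_sol zkh hzkh
  have h_dual : F z = J u := (hu z).symm.trans (hz u)
  simp only [map_sub]
  linarith [hz ukh]
end
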